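/- For every a ∈ {2,…,K} and all N_1, N_a > 0: (i) the function x ↦ N_1·d(μ_1, x) + N_a·d(μ_a, x) attains its minimum over S uniquely at x = x_{1,a}(N_1, N_a) = (N_1μ_1 + N_aμ_a)/(N_1 + N_a), so that W_a(N_1, N_a) = min_{x∈S} (N_1·d(μ_1, x) + N_a·d(μ_a, x)); in particular W_a(N_1, N_a) ≤ min{N_1·d(μ_1, μ_a), N_a·d(μ_a, μ_1)}. (ii) Writing d_2 for the partial derivative of d in its second argument, one has N_1·d_2(μ_1, x_{1,a}) + N_a·d_2(μ_a, x_{1,a}) = 0, and consequently the partial derivatives of W_a satisfy ∂W_a/∂N_1 = d(μ_1, x_{1,a}) and ∂W_a/∂N_a = d(μ_a, x_{1,a}). -/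

import Mathlib

open scoped BigOperators

/-- A single-parameter exponential family, given by the log-partition function `b`,
smooth with positive second derivative on an open interval `Θ`, together with the
inverse `θof` of `b'` on the set of means `S = b'(Θ)`. -/
structure SPEF where
  Θ : Set ℝ
  Θ_isOpen : IsOpen Θ
  Θ_ordConnected : Set.OrdConnected Θ
  Θ_nonempty : Θ.Nonempty
  b : ℝ → ℝ
  b_smooth : ContDiffOn ℝ (⊤ : ℕ∞) b Θ
  b_conv : ∀ t ∈ Θ, 0 < iteratedDeriv 2 b t
  θof : ℝ → ℝ
  θof_mem : ∀ μ ∈ deriv b '' Θ, θof μ ∈ Θ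
  θof_spec : ∀ μ ∈ deriv b '' Θ, deriv b (θof μ) = μ

namespace SPEF

/-- The set of means of the family. -/
def S (F : SPEF) : Set ℝ := deriv F.b '' F.Θ

/-- KL divergence `d(μ, x)` between the members of the family with means `μ` and `x`. -/
noncomputable def d (F : SPEF) (μ x : ℝ) : ℝ :=
  (F.θof μ - F.θof x) * μ - F.b (F.θof μ) + F.b (F.θof x)

end SPEF

/-- A `K`-armed bandit instance with arm distributions in a fixed SPEF; arm `0`
(the paper's arm `1`) is the unique best arm. -/
structure Bandit (K : ℕ) [NeZero K] extends SPEF where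
  two_le : 2 ≤ K
  μ : Fin K → ℝ
  μ_mem : ∀ a, μ a ∈ SPEF.S toSPEF
  μ_best : ∀ a : Fin K, a ≠ 0 → μ a < μ 0

namespace Bandit

variable {K : ℕ} [NeZero K]

/-- KL divergence of the underlying family. -/
noncomputable def d (M : Bandit K) : ℝ → ℝ → ℝ := M.toSPEF.d

/-- The weighted mean `x_{1,a}(N₁, N_a)`. -/
noncomputable def x1 (M : Bandit K) (a : Fin K) (N1 Na : ℝ) : ℝ :=
  (N1 * M.μ 0 + Na * M.μ a) / (N1 + Na)

/-- The index `W_a(N₁, N_a)` of an arm `a ≠ 1`. -/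
noncomputable def W (M : Bandit K) (a : Fin K) (N1 Na : ℝ) : ℝ :=
  N1 * M.d (M.μ 0) (M.x1 a N1 Na) + Na * M.d (M.μ a) (M.x1 a N1 Na)

/-- The set `{2, …, K}` of suboptimal arms. -/
def alt (K : ℕ) [NeZero K] : Finset (Fin K) := Finset.univ.filter (fun a => a ≠ 0)

/-- The anchor function `g(μ, N)`. -/
noncomputable def g (M : Bandit K) (Nv : Fin K → ℝ) : ℝ :=
  (∑ a ∈ alt K, M.d (M.μ 0) (M.x1 a (Nv 0) (Nv a)) / M.d (M.μ a) (M.x1 a (Nv 0) (Nv a))) - 1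

end Bandit

open Bandit

/-- Partial derivative of the KL divergence `d` in its second argument. -/
noncomputable def Bandit.d2 {K : ℕ} [NeZero K] (M : Bandit K) (μv x : ℝ) : ℝ :=
  deriv (fun y => M.d μv y) x

namespace SPEF

variable (F : SPEF)

theorem hasDerivAt_b {t : ℝ} (ht : t ∈ F.Θ) : HasDerivAt F.b (deriv F.b t) t :=
  ((F.b_smooth.differentiableOn (by simp)).differentiableAt
    (F.Θ_isOpen.mem_nhds ht)).hasDerivAt

theorem hasStrictDerivAt_deriv_b {t : ℝ} (ht : t ∈ F.Θ) :
    HasStrictDerivAt (deriv F.b) (iteratedDeriv 2 F.b t) t := by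
  have hsmooth : ContDiffOn ℝ 1 (deriv F.b) F.Θ :=
    F.b_smooth.deriv_of_isOpen F.Θ_isOpen (by norm_cast)
  have hstrict := (hsmooth.contDiffAt (F.Θ_isOpen.mem_nhds ht)).hasStrictDerivAt one_ne_zero
  rwa [show deriv (deriv F.b) t = iteratedDeriv 2 F.b t by
    rw [iteratedDeriv_succ, iteratedDeriv_one]] at hstrict

theorem continuousOn_deriv_b : ContinuousOn (deriv F.b) F.Θ := fun _ ht =>
  (F.hasStrictDerivAt_deriv_b ht).hasDerivAt.continuousAt.continuousWithinAt

theorem strictMonoOn_deriv_b : StrictMonoOn (deriv F.b) F.Θ := by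
  refine strictMonoOn_of_deriv_pos F.Θ_ordConnected.convex F.continuousOn_deriv_b fun t ht => ?_
  have ht' := interior_subset ht
  rw [(F.hasStrictDerivAt_deriv_b ht').hasDerivAt.deriv]
  exact F.b_conv t ht'

theorem strictConvexOn_b : StrictConvexOn ℝ F.Θ F.b := by
  refine StrictMonoOn.strictConvexOn_of_deriv F.Θ_ordConnected.convex
    (fun t ht => (F.hasDerivAt_b ht).continuousAt.continuousWithinAt) ?_
  exact F.strictMonoOn_deriv_b.mono interior_subset

theorem θof_deriv_b {t : ℝ} (ht : t ∈ F.Θ) : F.θof (deriv F.b t) = t :=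
  F.strictMonoOn_deriv_b.injOn (F.θof_mem _ ⟨t, ht, rfl⟩) ht (F.θof_spec _ ⟨t, ht, rfl⟩)

theorem ordConnected_S : F.S.OrdConnected :=
  (F.Θ_ordConnected.isPreconnected.image _ F.continuousOn_deriv_b).ordConnected

theorem hasDerivAt_θof {x : ℝ} (hx : x ∈ F.S) :
    HasDerivAt F.θof (iteratedDeriv 2 F.b (F.θof x))⁻¹ x := by
  have hmem := F.θof_mem x hx
  have hinv := (F.hasStrictDerivAt_deriv_b hmem).to_local_left_inverse (F.b_conv _ hmem).ne'
    (Filter.eventually_of_mem (F.Θ_isOpen.mem_nhds hmem) fun _ ht => F.θof_deriv_b ht)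
  rw [F.θof_spec x hx] at hinv
  exact hinv.hasDerivAt

theorem hasDerivAt_d (μ : ℝ) {x : ℝ} (hx : x ∈ F.S) :
    HasDerivAt (F.d μ) ((x - μ) * (iteratedDeriv 2 F.b (F.θof x))⁻¹) x := by
  have hθ := F.hasDerivAt_θof hx
  have hb := (F.hasDerivAt_b (F.θof_mem x hx)).comp x hθ
  rw [F.θof_spec x hx] at hb
  exact ((((hθ.const_sub (F.θof μ)).mul_const μ).sub_const (F.b (F.θof μ))).add hb).congr_deriv
    (by ring)

theorem d_self (μ : ℝ) : F.d μ μ = 0 := by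
  simp [d]

theorem d_pos {μ x : ℝ} (hμ : μ ∈ F.S) (hx : x ∈ F.S) (hne : x ≠ μ) : 0 < F.d μ x := by
  have hμΘ := F.θof_mem μ hμ
  have hxΘ := F.θof_mem x hx
  have hb : HasDerivAt F.b μ (F.θof μ) := by
    simpa only [F.θof_spec μ hμ] using F.hasDerivAt_b hμΘ
  have hθne : F.θof x ≠ F.θof μ := fun h => hne (by
    rw [← F.θof_spec x hx, h, F.θof_spec μ hμ])
  unfold d
  rcases hθne.lt_or_gt with hlt | hlt
  · have hslope := F.strictConvexOn_b.slope_lt_of_hasDerivAt hxΘ hμΘ hlt hb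
    rw [slope_def_field, div_lt_iff₀ (sub_pos.2 hlt)] at hslope
    linarith
  · have hslope := F.strictConvexOn_b.lt_slope_of_hasDerivAt hμΘ hxΘ hlt hb
    rw [slope_def_field, lt_div_iff₀ (sub_pos.2 hlt)] at hslope
    linarith

theorem d_nonneg {μ x : ℝ} (hμ : μ ∈ F.S) (hx : x ∈ F.S) : 0 ≤ F.d μ x := by
  rcases eq_or_ne x μ with rfl | hne
  · exact (F.d_self x).ge
  · exact (F.d_pos hμ hx hne).le

/-- Compensation identity: the weighted cost at `x` exceeds the one at the barycenter `z`
by the total weight times `d(z, x)`. -/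
theorem weighted_d_eq {m n p q z : ℝ} (hz : (m + n) * z = m * p + n * q) (x : ℝ) :
    m * F.d p x + n * F.d q x = m * F.d p z + n * F.d q z + (m + n) * F.d z x := by
  unfold d
  linear_combination (F.θof x - F.θof z) * hz

/-- Envelope property: if `z t` is the barycenter, the motion of `z` does not contribute to the
derivative of the weighted cost at `t`. -/
theorem hasDerivAt_weighted_d {m n z : ℝ → ℝ} {m' n' z' p q t : ℝ} (hm : HasDerivAt m m' t)
    (hn : HasDerivAt n n' t) (hz : HasDerivAt z z' t) (hzS : z t ∈ F.S)
    (hbary : (m t + n t) * z t = m t * p + n t * q) :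
    HasDerivAt (fun s => m s * F.d p (z s) + n s * F.d q (z s))
      (m' * F.d p (z t) + n' * F.d q (z t)) t := by
  have hp := (F.hasDerivAt_d p hzS).comp t hz
  have hq := (F.hasDerivAt_d q hzS).comp t hz
  refine ((hm.mul hp).add (hn.mul hq)).congr_deriv ?_
  simp only [Function.comp_apply]
  linear_combination (iteratedDeriv 2 F.b (F.θof (z t)))⁻¹ * z' * hbary

end SPEF

namespace Bandit

variable {K : ℕ} [NeZero K] (M : Bandit K) (a : Fin K) {N1 Na : ℝ}

theorem add_mul_x1 (hN1 : 0 < N1) (hNa : 0 < Na) :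
    (N1 + Na) * M.x1 a N1 Na = N1 * M.μ 0 + Na * M.μ a :=
  mul_div_cancel₀ _ (add_pos hN1 hNa).ne'

theorem x1_mem_S (hN1 : 0 < N1) (hNa : 0 < Na) : M.x1 a N1 Na ∈ M.toSPEF.S := by
  have hsum := add_pos hN1 hNa
  convert M.toSPEF.ordConnected_S.convex (M.μ_mem 0) (M.μ_mem a)
    (div_pos hN1 hsum).le (div_pos hNa hsum).le (by field_simp) using 1
  simp only [x1, smul_eq_mul]
  ring

end Bandit

/-- `x_{1,a}` is the unique minimizer of the weighted KL cost over `S`,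
the first-order condition in the second argument, and the partial derivatives of `W_a`. -/
theorem statement_3 {K : ℕ} [NeZero K] (M : Bandit K) (a : Fin K) (ha : a ∈ alt K)
    (N1 Na : ℝ) (hN1 : 0 < N1) (hNa : 0 < Na) :
    -- (i) unique minimizer and value
    (M.x1 a N1 Na ∈ SPEF.S M.toSPEF ∧
      (∀ x ∈ SPEF.S M.toSPEF,
        N1 * M.d (M.μ 0) (M.x1 a N1 Na) + Na * M.d (M.μ a) (M.x1 a N1 Na) ≤
          N1 * M.d (M.μ 0) x + Na * M.d (M.μ a) x) ∧
      (∀ x ∈ SPEF.S M.toSPEF,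
        N1 * M.d (M.μ 0) x + Na * M.d (M.μ a) x =
          N1 * M.d (M.μ 0) (M.x1 a N1 Na) + Na * M.d (M.μ a) (M.x1 a N1 Na) →
        x = M.x1 a N1 Na) ∧
      M.W a N1 Na ≤ min (N1 * M.d (M.μ 0) (M.μ a)) (Na * M.d (M.μ a) (M.μ 0))) ∧
    -- (ii) first-order condition and partial derivatives of `W_a`
    (N1 * M.d2 (M.μ 0) (M.x1 a N1 Na) + Na * M.d2 (M.μ a) (M.x1 a N1 Na) = 0 ∧
      HasDerivAt (fun t => M.W a t Na) (M.d (M.μ 0) (M.x1 a N1 Na)) N1 ∧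
      HasDerivAt (fun t => M.W a N1 t) (M.d (M.μ a) (M.x1 a N1 Na)) Na) := by
  have hz := M.add_mul_x1 a hN1 hNa
  have hzS := M.x1_mem_S a hN1 hNa
  have hsum := add_pos hN1 hNa
  have hdecomp := M.toSPEF.weighted_d_eq hz
  have hmin : ∀ x ∈ SPEF.S M.toSPEF,
      N1 * M.d (M.μ 0) (M.x1 a N1 Na) + Na * M.d (M.μ a) (M.x1 a N1 Na) ≤
        N1 * M.d (M.μ 0) x + Na * M.d (M.μ a) x := fun x hx =>
    (le_add_of_nonneg_right (mul_nonneg hsum.le (M.toSPEF.d_nonneg hzS hx))).trans_eq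
      (hdecomp x).symm
  refine ⟨⟨hzS, hmin, fun x hx heq => ?_, le_min ?_ ?_⟩, ?_, ?_, ?_⟩
  · by_contra hne
    have hpos := mul_pos hsum (M.toSPEF.d_pos hzS hx hne)
    have hx_eq := hdecomp x
    simp only [Bandit.d] at heq
    linarith
  · refine (hmin _ (M.μ_mem a)).trans_eq ?_
    simp [Bandit.d, SPEF.d_self]
  · refine (hmin _ (M.μ_mem 0)).trans_eq ?_
    simp [Bandit.d, SPEF.d_self]
  · have hd2 (μ : ℝ) : M.d2 μ (M.x1 a N1 Na) = _ := (M.toSPEF.hasDerivAt_d μ hzS).deriv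
    rw [hd2, hd2]
    linear_combination (iteratedDeriv 2 M.b (M.θof (M.x1 a N1 Na)))⁻¹ * hz
  · have hx1 : DifferentiableAt ℝ (fun t => M.x1 a t Na) N1 := by
      unfold x1
      fun_prop (disch := exact hsum.ne')
    exact (M.toSPEF.hasDerivAt_weighted_d (hasDerivAt_id N1) (hasDerivAt_const N1 Na)
      hx1.hasDerivAt hzS hz).congr_deriv (by simp [Bandit.d])
  · have hx1 : DifferentiableAt ℝ (fun t => M.x1 a N1 t) Na := by
      unfold x1
      fun_prop (disch := exact hsum.ne')
    exact (M.toSPEF.hasDerivAt_weighted_d (hasDerivAt_const Na N1) (hasDerivAt_id Na)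
      hx1.hasDerivAt hzS hz).congr_deriv (by simp [Bandit.d])
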